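/- Let f : M₁ ⇢ M₂ be an L∞ morphism of differential graded Lie algebras over a field K of characteristic 0 with M₂ homotopy abelian. If the linear part of f induces an injective morphism in cohomology H^*(M₁) → H^*(M₂), then M₁ is also homotopy abelian. -/

import Mathlib

/-!
Basic homotopical algebra of differential graded Lie algebras over a field of
characteristic zero, following [Iacono, "Deformations and obstructions of pairs (X,D)"].

A differential graded Lie algebra (DGLA) is encoded as a `K`-module together with an
internal `ℤ`-grading (a family of submodules whose direct sum is the whole module),
a differential of degree `+1` squaring to zero, and a bracket which is graded
skew-symmetric, satisfies the graded Jacobi identity and the graded Leibniz rule.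
-/

universe u v w

/-- A `ℤ`-graded cochain complex structure on a `K`-module `V`: an internal grading
together with a differential of degree `+1` squaring to zero. -/
structure CochainStruct (K : Type u) [Field K] (V : Type v) [AddCommGroup V] [Module K V] :
    Type (max u v) where
  grading : ℤ → Submodule K V
  isInternal : DirectSum.IsInternal grading
  d : V →ₗ[K] V
  d_degree : ∀ i : ℤ, ∀ x ∈ grading i, d x ∈ grading (i + 1)
  d_sq : ∀ x : V, d (d x) = 0

namespace CochainStruct

variable {K : Type u} [Field K] {V : Type v} [AddCommGroup V] [Module K V]
  {W : Type w} [AddCommGroup W] [Module K W]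

/-- Degree `i` cocycles. -/
def cocycles (c : CochainStruct K V) (i : ℤ) : Submodule K V :=
  c.grading i ⊓ LinearMap.ker c.d

/-- Degree `i` coboundaries, as a submodule of the degree `i` cocycles. -/
def coboundaries (c : CochainStruct K V) (i : ℤ) : Submodule K (c.cocycles i) :=
  Submodule.comap (c.cocycles i).subtype (c.grading i ⊓ LinearMap.range c.d)

/-- The degree `i` cohomology of a graded cochain complex. -/
def cohomology (c : CochainStruct K V) (i : ℤ) : Type v :=
  c.cocycles i ⧸ c.coboundaries i

instance (c : CochainStruct K V) (i : ℤ) : AddCommGroup (c.cohomology i) :=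
  inferInstanceAs (AddCommGroup (c.cocycles i ⧸ c.coboundaries i))

instance (c : CochainStruct K V) (i : ℤ) : Module K (c.cohomology i) :=
  inferInstanceAs (Module K (c.cocycles i ⧸ c.coboundaries i))

end CochainStruct

/-- A (degree zero) morphism of graded cochain complexes. -/
structure CochainMap {K : Type u} [Field K] {V : Type v} {W : Type w}
    [AddCommGroup V] [Module K V] [AddCommGroup W] [Module K W]
    (c : CochainStruct K V) (c' : CochainStruct K W) : Type (max u v w) where
  toFun : V →ₗ[K] W
  map_grading : ∀ i : ℤ, ∀ x ∈ c.grading i, toFun x ∈ c'.grading i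
  map_d : ∀ x : V, toFun (c.d x) = c'.d (toFun x)

namespace CochainMap

variable {K : Type u} [Field K] {V : Type v} {W : Type w}
  [AddCommGroup V] [Module K V] [AddCommGroup W] [Module K W]
  {c : CochainStruct K V} {c' : CochainStruct K W}

/-- The induced map on cocycles. -/
def cocyclesMap (f : CochainMap c c') (i : ℤ) : c.cocycles i →ₗ[K] c'.cocycles i :=
  f.toFun.restrict (p := c.cocycles i) (q := c'.cocycles i) fun x hx => by
    rcases Submodule.mem_inf.mp hx with ⟨h1, h2⟩
    refine Submodule.mem_inf.mpr ⟨f.map_grading i x h1, ?_⟩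
    simp only [LinearMap.mem_ker] at h2 ⊢
    rw [← f.map_d, h2, map_zero]

/-- The induced map in cohomology. -/
def cohMap (f : CochainMap c c') (i : ℤ) :
    c.cohomology i →ₗ[K] c'.cohomology i :=
  Submodule.mapQ (c.coboundaries i) (c'.coboundaries i) (f.cocyclesMap i) (by
    rintro ⟨x, hx⟩ hmem
    simp only [CochainStruct.coboundaries, Submodule.mem_comap] at hmem ⊢
    rcases Submodule.mem_inf.mp hmem with ⟨h1, h2⟩
    refine Submodule.mem_inf.mpr ⟨?_, ?_⟩
    · exact f.map_grading i x h1
    · rcases h2 with ⟨y, hy⟩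
      exact ⟨f.toFun y, by
        have := f.map_d y
        simp only [Submodule.coe_subtype] at hy ⊢
        rw [← this, hy]
        rfl⟩)

end CochainMap

/-- A differential graded Lie algebra structure on a `K`-module `L`:
a graded cochain complex together with a degree zero graded bracket which is
graded skew-symmetric and satisfies the graded Jacobi identity and the graded
Leibniz rule. -/
structure DGLAStruct (K : Type u) [Field K] (L : Type v) [AddCommGroup L] [Module K L]
    extends CochainStruct K L where
  bracket : L →ₗ[K] L →ₗ[K] L
  bracket_degree : ∀ i j : ℤ, ∀ x ∈ grading i, ∀ y ∈ grading j, bracket x y ∈ grading (i + j)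
  bracket_skew : ∀ i j : ℤ, ∀ x ∈ grading i, ∀ y ∈ grading j,
    bracket x y = -(((-1 : K) ^ (i * j)) • bracket y x)
  bracket_jacobi : ∀ i j : ℤ, ∀ x ∈ grading i, ∀ y ∈ grading j, ∀ z : L,
    bracket x (bracket y z) =
      bracket (bracket x y) z + ((-1 : K) ^ (i * j)) • bracket y (bracket x z)
  bracket_leibniz : ∀ i : ℤ, ∀ x ∈ grading i, ∀ y : L,
    d (bracket x y) = bracket (d x) y + ((-1 : K) ^ i) • bracket x (d y)

/-- A morphism of differential graded Lie algebras. -/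
structure DGLAStructHom {K : Type u} [Field K] {L : Type v} {M : Type w}
    [AddCommGroup L] [Module K L] [AddCommGroup M] [Module K M]
    (g : DGLAStruct K L) (h : DGLAStruct K M) : Type (max u v w) where
  toFun : L →ₗ[K] M
  map_grading : ∀ i : ℤ, ∀ x ∈ g.grading i, toFun x ∈ h.grading i
  map_d : ∀ x : L, toFun (g.d x) = h.d (toFun x)
  map_bracket : ∀ x y : L, toFun (g.bracket x y) = h.bracket (toFun x) (toFun y)

namespace DGLAStructHom

variable {K : Type u} [Field K] {L : Type v} {M : Type w}
  [AddCommGroup L] [Module K L] [AddCommGroup M] [Module K M]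
  {g : DGLAStruct K L} {h : DGLAStruct K M}

/-- The underlying morphism of complexes of a morphism of DGLAs. -/
def toCochainMap (f : DGLAStructHom g h) :
    CochainMap g.toCochainStruct h.toCochainStruct :=
  ⟨f.toFun, f.map_grading, f.map_d⟩

/-- A quasi-isomorphism of DGLAs is a morphism inducing bijections in cohomology. -/
def IsQuasiIso (f : DGLAStructHom g h) : Prop :=
  ∀ i : ℤ, Function.Bijective (f.toCochainMap.cohMap i)

end DGLAStructHom

/-- A bundled differential graded Lie algebra over `K`. -/
structure DGLA (K : Type u) [Field K] : Type (max u (v + 1)) where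
  carrier : Type v
  [acg : AddCommGroup carrier]
  [mod : Module K carrier]
  str : DGLAStruct K carrier

attribute [instance] DGLA.acg DGLA.mod

namespace DGLA

variable {K : Type u} [Field K]

/-- Two DGLAs are related if there is a quasi-isomorphism from the first to the second. -/
def qisRel : DGLA.{u, v} K → DGLA.{u, v} K → Prop := fun X Y =>
  ∃ f : DGLAStructHom X.str Y.str, f.IsQuasiIso

/-- Homotopy equivalence of DGLAs: the equivalence relation generated by
quasi-isomorphisms. -/
def HomotopyEquiv (X Y : DGLA.{u, v} K) : Prop :=
  Relation.EqvGen qisRel X Y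

/-- A DGLA is abelian if its bracket is trivial. -/
def IsAbelian (X : DGLA.{u, v} K) : Prop :=
  ∀ x y : X.carrier, X.str.bracket x y = 0

/-- A DGLA is homotopy abelian if it is homotopy equivalent (i.e. quasi-isomorphic,
under the equivalence relation generated by quasi-isomorphisms) to an abelian DGLA. -/
def HomotopyAbelian (X : DGLA.{u, v} K) : Prop :=
  ∃ Y : DGLA.{u, v} K, Y.IsAbelian ∧ X.HomotopyEquiv Y

end DGLA

/-- A zig-zag of morphisms of DGLAs (the backwards arrows being quasi-isomorphisms):
a morphism in the homotopy category of DGLAs, i.e. an `L∞` morphism of DGLAs. -/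
inductive ZigZag {K : Type u} [Field K] : DGLA.{u, v} K → DGLA.{u, v} K → Type (max u (v + 1))
  | refl (X : DGLA.{u, v} K) : ZigZag X X
  | fwd {X Y Z : DGLA.{u, v} K} (f : DGLAStructHom X.str Y.str) (t : ZigZag Y Z) : ZigZag X Z
  | bwd {X Y Z : DGLA.{u, v} K} (f : DGLAStructHom Y.str X.str) (hf : f.IsQuasiIso)
      (t : ZigZag Y Z) : ZigZag X Z

/-- The map induced in cohomology by a zig-zag of morphisms of DGLAs. -/
noncomputable def ZigZag.cohMap {K : Type u} [Field K] :
    ∀ {X Y : DGLA.{u, v} K}, ZigZag X Y → ∀ i : ℤ,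
      X.str.toCochainStruct.cohomology i →ₗ[K] Y.str.toCochainStruct.cohomology i
  | _, _, .refl _, _ => LinearMap.id
  | _, _, .fwd f t, i => (t.cohMap i).comp (f.toCochainMap.cohMap i)
  | _, _, .bwd f hf t, i =>
      (t.cohMap i).comp
        ((LinearEquiv.ofBijective (f.toCochainMap.cohMap i) (hf i)).symm.toLinearMap)

section Helpers

namespace CochainStruct

variable {K : Type u} [Field K] {V : Type v} [AddCommGroup V] [Module K V]
  {W : Type w} [AddCommGroup W] [Module K W]

/-- Linear map defined on homogeneous components. -/
noncomputable def lift (c : CochainStruct K V) (φ : ∀ i, c.grading i →ₗ[K] W) : V →ₗ[K] W :=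
  (DirectSum.toModule K ℤ W φ) ∘ₗ
    (LinearEquiv.ofBijective (DirectSum.coeLinearMap c.grading) c.isInternal).symm.toLinearMap

theorem lift_mem (c : CochainStruct K V) (φ : ∀ i, c.grading i →ₗ[K] W) (i : ℤ) (x : V)
    (hx : x ∈ c.grading i) : c.lift φ x = φ i ⟨x, hx⟩ := by
  have : (LinearEquiv.ofBijective (DirectSum.coeLinearMap c.grading) c.isInternal).symm x
      = DirectSum.lof K ℤ (fun i => c.grading i) i ⟨x, hx⟩ := by
    rw [LinearEquiv.symm_apply_eq]
    exact (DirectSum.coeLinearMap_lof c.grading i ⟨x, hx⟩).symm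
  simp [lift, this]

theorem hom_induction (c : CochainStruct K V) (p : V → Prop) (x : V)
    (h0 : p 0) (hadd : ∀ x y, p x → p y → p (x + y)) (hh : ∀ i, ∀ x ∈ c.grading i, p x) : p x := by
  have hx : x ∈ ⨆ i, c.grading i := by
    rw [c.isInternal.submodule_iSup_eq_top]; trivial
  exact Submodule.iSup_induction c.grading (motive := p) hx hh h0 hadd

open Classical in
/-- Projection. -/
noncomputable def pr (c : CochainStruct K V) (i : ℤ) : V →ₗ[K] V :=
  c.lift (fun j => if j = i then (c.grading j).subtype else 0)

theorem pr_same (c : CochainStruct K V) {i : ℤ} {x : V} (hx : x ∈ c.grading i) :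
    c.pr i x = x := by
  rw [pr, lift_mem _ _ i x hx]; simp

theorem pr_ne (c : CochainStruct K V) {i j : ℤ} {x : V} (hx : x ∈ c.grading j) (h : j ≠ i) :
    c.pr i x = 0 := by
  rw [pr, lift_mem _ _ j x hx]; simp [h]

theorem pr_mem (c : CochainStruct K V) (i : ℤ) (x : V) : c.pr i x ∈ c.grading i := by
  refine c.hom_induction (fun x => c.pr i x ∈ c.grading i) x (by simp) (fun x y hx hy => ?_)
    (fun j x hx => ?_)
  · rw [map_add]; exact add_mem hx hy
  · by_cases h : j = i
    · subst h; rw [pr_same _ hx]; exact hx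
    · rw [pr_ne _ hx h]; exact zero_mem _

theorem pr_comm (c : CochainStruct K V) (c' : CochainStruct K W) (k : ℤ) (φ : V →ₗ[K] W)
    (hφ : ∀ i, ∀ x ∈ c.grading i, φ x ∈ c'.grading (i + k)) (i : ℤ) (x : V) :
    φ (c.pr i x) = c'.pr (i + k) (φ x) := by
  refine c.hom_induction (fun x => φ (c.pr i x) = c'.pr (i + k) (φ x)) x (by simp)
    (fun x y hx hy => ?_) (fun j x hx => ?_)
  · simp only [map_add, hx, hy]
  · by_cases h : j = i
    · subst h; rw [pr_same _ hx, pr_same _ (hφ _ _ hx)]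
    · rw [pr_ne _ hx h, pr_ne _ (hφ _ _ hx) (by omega), map_zero]

theorem pr_d (c : CochainStruct K V) (i : ℤ) (x : V) : c.d (c.pr i x) = c.pr (i + 1) (c.d x) :=
  c.pr_comm c 1 c.d c.d_degree i x

theorem pr_sum (c : CochainStruct K V) (x : V) :
    ∃ s : Finset ℤ, ∀ t, s ⊆ t → ∑ i ∈ t, c.pr i x = x := by
  classical
  refine c.hom_induction
    (fun x => ∃ s : Finset ℤ, ∀ t, s ⊆ t → ∑ i ∈ t, c.pr i x = x) x ⟨∅, by simp⟩ ?_ ?_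
  · rintro x y ⟨s, hs⟩ ⟨s', hs'⟩
    refine ⟨s ∪ s', fun t ht => ?_⟩
    simp only [map_add, Finset.sum_add_distrib]
    rw [hs t (Finset.union_subset_left ht), hs' t (Finset.union_subset_right ht)]
  · intro i x hx
    refine ⟨{i}, fun t ht => ?_⟩
    rw [Finset.sum_eq_single i, pr_same _ hx]
    · intro j _ hj; exact pr_ne _ hx hj.symm
    · intro h; exact absurd (ht (by simp)) h

/-- The sign operator. -/
noncomputable def sgn (c : CochainStruct K V) : V →ₗ[K] V :=
  c.lift (fun j => ((-1 : K) ^ j) • (c.grading j).subtype)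

theorem sgn_mem (c : CochainStruct K V) {i : ℤ} {x : V} (hx : x ∈ c.grading i) :
    c.sgn x = ((-1 : K) ^ i) • x := by
  rw [sgn, lift_mem _ _ i x hx]; simp

/-- A criterion for internal direct sums. -/
theorem mkInternal (G : ℤ → Submodule K V) (π : ℤ → V →ₗ[K] V)
    (h1 : ∀ i, ∀ x ∈ G i, π i x = x) (h2 : ∀ i j, j ≠ i → ∀ x ∈ G j, π i x = 0)
    (h3 : ∀ x, x ∈ ⨆ i, G i) : DirectSum.IsInternal G := by
  rw [DirectSum.isInternal_submodule_iff_iSupIndep_and_iSup_eq_top]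
  refine ⟨fun i => ?_, eq_top_iff.2 fun x _ => h3 x⟩
  rw [Submodule.disjoint_def]
  intro x hx hx'
  have : (⨆ j, ⨆ (_ : j ≠ i), G j) ≤ LinearMap.ker (π i) :=
    iSup_le fun j => iSup_le fun hj x hx => h2 i j hj x hx
  rw [← h1 i x hx]
  exact this hx'

/-- class of a cocycle -/
def cls (c : CochainStruct K V) (i : ℤ) : c.cocycles i →ₗ[K] c.cohomology i :=
  (c.coboundaries i).mkQ

theorem cls_surj (c : CochainStruct K V) (i : ℤ) (ξ : c.cohomology i) :
    ∃ (x : V) (h1 : x ∈ c.grading i) (h2 : c.d x = 0), ξ = c.cls i ⟨x, h1, h2⟩ := by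
  obtain ⟨⟨x, h1, h2⟩, h⟩ := (c.coboundaries i).mkQ_surjective ξ
  exact ⟨x, h1, h2, h.symm⟩

theorem cls_eq_zero (c : CochainStruct K V) (i : ℤ) (x : c.cocycles i) :
    c.cls i x = 0 ↔ ∃ y, c.d y = x := by
  refine (Submodule.Quotient.mk_eq_zero _).trans ?_
  constructor
  · rintro ⟨_, h⟩; exact h
  · intro h; exact ⟨x.2.1, h⟩

theorem cls_eq (c : CochainStruct K V) (i : ℤ) (x y : c.cocycles i) :
    c.cls i x = c.cls i y ↔ ∃ w, c.d w = (x : V) - y := by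
  rw [← sub_eq_zero, ← map_sub, cls_eq_zero]; rfl

end CochainStruct

namespace CochainMap

variable {K : Type u} [Field K] {V : Type v} {W : Type w}
  [AddCommGroup V] [Module K V] [AddCommGroup W] [Module K W]
  {c : CochainStruct K V} {c' : CochainStruct K W}

theorem cohMap_cls (f : CochainMap c c') (i : ℤ) (x : c.cocycles i) :
    f.cohMap i (c.cls i x) = c'.cls i (f.cocyclesMap i x) := rfl

theorem bij_iff (f : CochainMap c c') (i : ℤ) :
    Function.Bijective (f.cohMap i) ↔
      (∀ x ∈ c.grading i, c.d x = 0 → (∃ y, c'.d y = f.toFun x) → ∃ w, c.d w = x) ∧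
      (∀ y ∈ c'.grading i, c'.d y = 0 → ∃ x ∈ c.grading i, c.d x = 0 ∧
        ∃ w, c'.d w = f.toFun x - y) := by
  refine and_congr ?_ ?_
  · rw [injective_iff_map_eq_zero]
    constructor
    · intro h x hx hd hy
      exact (c.cls_eq_zero i ⟨x, hx, hd⟩).1 (h _ (by
        rw [cohMap_cls, c'.cls_eq_zero]; exact hy))
    · intro h ξ hξ
      obtain ⟨x, hx, hd, rfl⟩ := c.cls_surj i ξ
      rw [cohMap_cls, c'.cls_eq_zero] at hξ
      rw [c.cls_eq_zero]
      exact h x hx hd hξ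
  · constructor
    · intro h y hy hd
      obtain ⟨ξ, hξ⟩ := h (c'.cls i ⟨y, hy, hd⟩)
      obtain ⟨x, hx, hdx, rfl⟩ := c.cls_surj i ξ
      rw [cohMap_cls, c'.cls_eq] at hξ
      exact ⟨x, hx, hdx, hξ⟩
    · intro h η
      obtain ⟨y, hy, hd, rfl⟩ := c'.cls_surj i η
      obtain ⟨x, hx, hdx, hw⟩ := h y hy hd
      exact ⟨c.cls i ⟨x, hx, hdx⟩, by rw [cohMap_cls, c'.cls_eq]; exact hw⟩

/-- Ungraded description of quasi-isomorphisms. -/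
theorem bij_all_iff (f : CochainMap c c') :
    (∀ i, Function.Bijective (f.cohMap i)) ↔
      (∀ x, c.d x = 0 → (∃ y, c'.d y = f.toFun x) → ∃ w, c.d w = x) ∧
      (∀ y, c'.d y = 0 → ∃ x, c.d x = 0 ∧ ∃ w, c'.d w = f.toFun x - y) := by
  have hpr : ∀ i x, f.toFun (c.pr i x) = c'.pr i (f.toFun x) := fun i x => by
    have := c.pr_comm c' 0 f.toFun (by simpa using f.map_grading) i x
    simpa using this
  have hd0 : ∀ i x, c.d x = 0 → c.d (c.pr i x) = 0 := fun i x h => by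
    rw [c.pr_d, h, map_zero]
  have hd0' : ∀ i x, c'.d x = 0 → c'.d (c'.pr i x) = 0 := fun i x h => by
    rw [c'.pr_d, h, map_zero]
  have hdd : ∀ i y, c'.d (c'.pr (i - 1) y) = c'.pr i (c'.d y) := fun i y => by
    rw [c'.pr_d, sub_add_cancel]
  simp only [bij_iff]
  constructor
  · intro h
    constructor
    · rintro x hx ⟨y, hy⟩
      have : ∀ i, ∃ w, c.d w = c.pr i x := fun i =>
        (h i).1 _ (c.pr_mem i x) (hd0 i x hx) ⟨c'.pr (i - 1) y, by rw [hdd, hpr, hy]⟩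
      choose w hw using this
      obtain ⟨s, hs⟩ := c.pr_sum x
      refine ⟨∑ i ∈ s, w i, ?_⟩
      rw [map_sum, ← hs s subset_rfl]
      simp only [hw, hs s subset_rfl]
    · intro y hy
      have : ∀ i, ∃ x, c.d x = 0 ∧ ∃ w, c'.d w = f.toFun x - c'.pr i y := fun i => by
        obtain ⟨x, _, h1, h2⟩ := (h i).2 _ (c'.pr_mem i y) (hd0' i y hy)
        exact ⟨x, h1, h2⟩
      choose x hx w hw using this
      obtain ⟨s, hs⟩ := c'.pr_sum y
      refine ⟨∑ i ∈ s, x i, by simp [hx], ∑ i ∈ s, w i, ?_⟩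
      simp only [map_sum, hw, Finset.sum_sub_distrib, hs s subset_rfl]
  · rintro ⟨h1, h2⟩ i
    constructor
    · intro x _ hx hy; exact h1 x hx hy
    · intro y hyi hy
      obtain ⟨x, hx, w, hw⟩ := h2 y hy
      refine ⟨c.pr i x, c.pr_mem i x, hd0 i x hx, c'.pr (i - 1) w, ?_⟩
      rw [hdd, hw, map_sub, hpr, c'.pr_same hyi]

end CochainMap

namespace DGLAStructHom

variable {K : Type u} [Field K] {L M N : Type v}
  [AddCommGroup L] [Module K L] [AddCommGroup M] [Module K M] [AddCommGroup N] [Module K N]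
  {g : DGLAStruct K L} {h : DGLAStruct K M} {k : DGLAStruct K N}

theorem qis_iff (f : DGLAStructHom g h) : f.IsQuasiIso ↔
      (∀ x, g.d x = 0 → (∃ y, h.d y = f.toFun x) → ∃ w, g.d w = x) ∧
      (∀ y, h.d y = 0 → ∃ x, g.d x = 0 ∧ ∃ w, h.d w = f.toFun x - y) :=
  f.toCochainMap.bij_all_iff

/-- identity -/
def idHom (g : DGLAStruct K L) : DGLAStructHom g g :=
  ⟨LinearMap.id, fun _ _ h => h, fun _ => rfl, fun _ _ => rfl⟩

/-- composition -/
def comp (f' : DGLAStructHom h k) (f : DGLAStructHom g h) : DGLAStructHom g k :=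
  ⟨f'.toFun ∘ₗ f.toFun, fun i x hx => f'.map_grading i _ (f.map_grading i x hx),
    fun x => by simp [f.map_d, f'.map_d], fun x y => by simp [f.map_bracket, f'.map_bracket]⟩

theorem cohMap_comp (f' : DGLAStructHom h k) (f : DGLAStructHom g h) (i : ℤ)
    (ξ : g.toCochainStruct.cohomology i) :
    (f'.comp f).toCochainMap.cohMap i ξ
      = f'.toCochainMap.cohMap i (f.toCochainMap.cohMap i ξ) := by
  obtain ⟨x, h1, h2, rfl⟩ := g.toCochainStruct.cls_surj i ξ
  rfl

theorem cohMap_id (i : ℤ) (ξ : g.toCochainStruct.cohomology i) :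
    (idHom g).toCochainMap.cohMap i ξ = ξ := by
  obtain ⟨x, h1, h2, rfl⟩ := g.toCochainStruct.cls_surj i ξ
  rfl

theorem qis_comp (f' : DGLAStructHom h k) (f : DGLAStructHom g h) (hf' : f'.IsQuasiIso)
    (hf : f.IsQuasiIso) : (f'.comp f).IsQuasiIso := fun i => by
  have : ⇑((f'.comp f).toCochainMap.cohMap i)
      = (f'.toCochainMap.cohMap i) ∘ (f.toCochainMap.cohMap i) :=
    funext fun ξ => cohMap_comp f' f i ξ
  rw [this]
  exact (hf' i).comp (hf i)

end DGLAStructHom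

namespace DGLAStructHom

variable {K : Type u} [Field K] {L M N : Type v}
  [AddCommGroup L] [Module K L] [AddCommGroup M] [Module K M] [AddCommGroup N] [Module K N]
  {g : DGLAStruct K L} {h : DGLAStruct K M} {k : DGLAStruct K N}

theorem map_pr (f : DGLAStructHom g h) (i : ℤ) (x : L) :
    f.toFun (g.pr i x) = h.pr i (f.toFun x) := by
  have := g.toCochainStruct.pr_comm h.toCochainStruct 0 f.toFun (by simpa using f.map_grading) i x
  simpa using this

/-- carrier of the fibre product -/
def pbSub (p : DGLAStructHom g k) (q : DGLAStructHom h k) : Submodule K (L × M) :=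
  LinearMap.eqLocus (p.toFun ∘ₗ LinearMap.fst K L M) (q.toFun ∘ₗ LinearMap.snd K L M)

theorem mem_pbSub {p : DGLAStructHom g k} {q : DGLAStructHom h k} {x : L × M} :
    x ∈ pbSub p q ↔ p.toFun x.1 = q.toFun x.2 := Iff.rfl

/-- grading of the fibre product -/
def pbGr (p : DGLAStructHom g k) (q : DGLAStructHom h k) (i : ℤ) : Submodule K (pbSub p q) :=
  ((g.grading i).prod (h.grading i)).comap (pbSub p q).subtype

theorem mem_pbGr {p : DGLAStructHom g k} {q : DGLAStructHom h k} {i : ℤ} {x : pbSub p q} :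
    x ∈ pbGr p q i ↔ x.1.1 ∈ g.grading i ∧ x.1.2 ∈ h.grading i := Iff.rfl

/-- projection -/
noncomputable def pbPr (p : DGLAStructHom g k) (q : DGLAStructHom h k) (i : ℤ) :
    pbSub p q →ₗ[K] pbSub p q :=
  ((g.pr i).prodMap (h.pr i)).restrict (p := pbSub p q) (q := pbSub p q) (fun x hx => by
    rw [mem_pbSub] at hx ⊢
    simp only [LinearMap.prodMap_apply]
    rw [map_pr, map_pr, hx])

theorem pbInternal (p : DGLAStructHom g k) (q : DGLAStructHom h k) :
    DirectSum.IsInternal (pbGr p q) := by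
  classical
  refine CochainStruct.mkInternal _ (pbPr p q) ?_ ?_ ?_
  · rintro i ⟨⟨a, b⟩, hx⟩ ⟨h1, h2⟩
    exact Subtype.ext (Prod.ext (g.pr_same h1) (h.pr_same h2))
  · rintro i j hj ⟨⟨a, b⟩, hx⟩ ⟨h1, h2⟩
    exact Subtype.ext (Prod.ext (g.pr_ne h1 hj) (h.pr_ne h2 hj))
  · intro x
    obtain ⟨s, hs⟩ := g.pr_sum x.1.1
    obtain ⟨t, ht⟩ := h.pr_sum x.1.2
    have : x = ∑ i ∈ s ∪ t, pbPr p q i x := by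
      refine Subtype.ext (Prod.ext ?_ ?_)
      · rw [AddSubmonoidClass.coe_finsetSum, Prod.fst_sum]
        exact (hs _ Finset.subset_union_left).symm
      · rw [AddSubmonoidClass.coe_finsetSum, Prod.snd_sum]
        exact (ht _ Finset.subset_union_right).symm
    rw [this]
    refine Submodule.sum_mem _ fun i _ => ?_
    refine Submodule.mem_iSup_of_mem i ?_
    exact ⟨g.pr_mem i _, h.pr_mem i _⟩

/-- The fibre product of DGLAs. -/
noncomputable def pb (p : DGLAStructHom g k) (q : DGLAStructHom h k) :
    DGLAStruct K (pbSub p q) where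
  grading := pbGr p q
  isInternal := pbInternal p q
  d := (g.d.prodMap h.d).restrict (p := pbSub p q) (q := pbSub p q) (fun x hx => by
    rw [mem_pbSub] at hx ⊢
    simp only [LinearMap.prodMap_apply]
    rw [p.map_d, q.map_d, hx])
  d_degree i x hx := ⟨g.d_degree i _ hx.1, h.d_degree i _ hx.2⟩
  d_sq x := Subtype.ext (Prod.ext (g.d_sq _) (h.d_sq _))
  bracket := LinearMap.mk₂ K
    (fun x y => ⟨(g.bracket x.1.1 y.1.1, h.bracket x.1.2 y.1.2), by
      have hx := mem_pbSub.1 x.2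
      have hy := mem_pbSub.1 y.2
      rw [mem_pbSub, p.map_bracket, q.map_bracket, hx, hy]⟩)
    (fun x y z => Subtype.ext (Prod.ext (by simp) (by simp)))
    (fun x y z => Subtype.ext (Prod.ext (by simp) (by simp)))
    (fun x y z => Subtype.ext (Prod.ext (by simp) (by simp)))
    (fun x y z => Subtype.ext (Prod.ext (by simp) (by simp)))
  bracket_degree i j x hx y hy :=
    ⟨g.bracket_degree i j _ hx.1 _ hy.1, h.bracket_degree i j _ hx.2 _ hy.2⟩
  bracket_skew i j x hx y hy := Subtype.ext (Prod.ext
    (g.bracket_skew i j _ hx.1 _ hy.1) (h.bracket_skew i j _ hx.2 _ hy.2))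
  bracket_jacobi i j x hx y hy z := Subtype.ext (Prod.ext
    (g.bracket_jacobi i j _ hx.1 _ hy.1 _) (h.bracket_jacobi i j _ hx.2 _ hy.2 _))
  bracket_leibniz i x hx y := Subtype.ext (Prod.ext
    (g.bracket_leibniz i _ hx.1 _) (h.bracket_leibniz i _ hx.2 _))

/-- first projection -/
noncomputable def pbFst (p : DGLAStructHom g k) (q : DGLAStructHom h k) :
    DGLAStructHom (pb p q) g :=
  ⟨LinearMap.fst K L M ∘ₗ (pbSub p q).subtype, fun _ _ hx => hx.1, fun _ => rfl, fun _ _ => rfl⟩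

/-- second projection -/
noncomputable def pbSnd (p : DGLAStructHom g k) (q : DGLAStructHom h k) :
    DGLAStructHom (pb p q) h :=
  ⟨LinearMap.snd K L M ∘ₗ (pbSub p q).subtype, fun _ _ hx => hx.2, fun _ => rfl, fun _ _ => rfl⟩

theorem pb_comm (p : DGLAStructHom g k) (q : DGLAStructHom h k) :
    p.comp (pbFst p q) = q.comp (pbSnd p q) := by
  have : p.toFun ∘ₗ (pbFst p q).toFun = q.toFun ∘ₗ (pbSnd p q).toFun :=
    LinearMap.ext fun x => mem_pbSub.1 x.2
  simp only [comp, this]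

theorem pbFst_qis (p : DGLAStructHom g k) (q : DGLAStructHom h k) (hs : Function.Surjective q.toFun)
    (hq : q.IsQuasiIso) : (pbFst p q).IsQuasiIso := by
  rw [qis_iff] at hq ⊢
  obtain ⟨q1, q2⟩ := hq
  constructor
  · rintro ⟨⟨a, b⟩, hab⟩ hx ⟨y, hy⟩
    have hab' : p.toFun a = q.toFun b := hab
    have hy' : g.d y = a := hy
    have hb : h.d b = 0 := congrArg (fun z : pbSub p q => z.1.2) hx
    -- b is exact
    obtain ⟨w, hw⟩ := q1 b hb ⟨p.toFun y, by rw [← p.map_d, hy', hab']⟩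
    -- correct w
    have hc : k.d (p.toFun y - q.toFun w) = 0 := by
      rw [map_sub, ← p.map_d, ← q.map_d, hy', hw, hab', sub_self]
    obtain ⟨z, hz, e, he⟩ := q2 _ hc
    obtain ⟨e', rfl⟩ := hs e
    refine ⟨⟨(y, w + z - h.d e'), ?_⟩, ?_⟩
    · rw [mem_pbSub]
      simp only [map_sub, map_add, q.map_d, he]
      abel
    · refine Subtype.ext (Prod.ext hy' ?_)
      change h.d (w + z - h.d e') = b
      rw [map_sub, map_add, hw, hz, h.d_sq]; simp
  · intro a ha
    obtain ⟨b, hb, w, hw⟩ := q2 (p.toFun a) (by rw [← p.map_d, ha, map_zero])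
    obtain ⟨w', rfl⟩ := hs w
    refine ⟨⟨(a, b - h.d w'), ?_⟩, ?_, 0, ?_⟩
    · rw [mem_pbSub]
      simp only [map_sub, q.map_d, hw]
      abel
    · refine Subtype.ext (Prod.ext ha ?_)
      change h.d (b - h.d w') = 0
      rw [map_sub, hb, h.d_sq, sub_zero]
    · change g.d 0 = a - a
      simp

end DGLAStructHom

section Coh

variable {K : Type u} [Field K] {V : Type v} [AddCommGroup V] [Module K V]

/-- Cohomology as an abelian DGLA with zero differential. -/
noncomputable def cohDGLA (c : CochainStruct K V) :
    DGLAStruct K (DirectSum ℤ (fun i => c.cohomology i)) where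
  grading i := LinearMap.range (DirectSum.lof K ℤ (fun i => c.cohomology i) i)
  isInternal := by
    refine CochainStruct.mkInternal _
      (fun i => DirectSum.lof K ℤ (fun i => c.cohomology i) i ∘ₗ
        DirectSum.component K ℤ (fun i => c.cohomology i) i) ?_ ?_ ?_
    · rintro i _ ⟨x, rfl⟩
      simp [DirectSum.component.lof_self]
    · rintro i j hj _ ⟨x, rfl⟩
      simp only [LinearMap.comp_apply]
      rw [DirectSum.component.of, dif_neg hj, map_zero]
    · intro x
      induction x using DirectSum.induction_on with
      | zero => exact zero_mem _
      | of i x => exact Submodule.mem_iSup_of_mem i ⟨x, rfl⟩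
      | add x y hx hy => exact add_mem hx hy
  d := 0
  d_degree := by simp
  d_sq := by simp
  bracket := 0
  bracket_degree := by simp
  bracket_skew := by simp
  bracket_jacobi := by simp
  bracket_leibniz := by simp

end Coh

namespace DGLA

variable {K : Type u} [Field K]

theorem toCoh_exists {C A : DGLA.{u, v} K} (hA : A.IsAbelian) (f : DGLAStructHom C.str A.str)
    (hf : ∀ i, Function.Injective (f.toCochainMap.cohMap i)) :
    ∃ φ : DGLAStructHom C.str (cohDGLA C.str.toCochainStruct), φ.IsQuasiIso := by
  let c := C.str.toCochainStruct
  let a := A.str.toCochainStruct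
  have hr : ∀ i, ∃ r : A.carrier →ₗ[K] c.cohomology i,
      ∀ x : a.cocycles i, ∀ ξ, a.cls i x = f.toCochainMap.cohMap i ξ → r x = ξ := fun i => by
    obtain ⟨r, hr⟩ := (f.toCochainMap.cohMap i).exists_leftInverse_of_injective
      (LinearMap.ker_eq_bot.2 (hf i))
    obtain ⟨r', hr'⟩ := (r ∘ₗ a.cls i).exists_extend
    refine ⟨r', fun x ξ h => ?_⟩
    have := LinearMap.congr_fun hr' x
    simp only [LinearMap.comp_apply, Submodule.subtype_apply] at this
    rw [this, h]
    exact LinearMap.congr_fun hr ξ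
  choose r hr using hr
  let Φ : A.carrier →ₗ[K] DirectSum ℤ (fun i => c.cohomology i) :=
    a.lift (fun i => DirectSum.lof K ℤ (fun i => c.cohomology i) i ∘ₗ r i ∘ₗ (a.grading i).subtype)
  have hΦ : ∀ i, ∀ x ∈ a.grading i, Φ x = DirectSum.lof K ℤ (fun i => c.cohomology i) i (r i x) :=
    fun i x hx => a.lift_mem _ i x hx
  have hΦd : ∀ x, Φ (a.d x) = 0 := fun x => by
    refine a.hom_induction (fun x => Φ (a.d x) = 0) x (by simp) (fun x y hx hy => ?_)
      (fun i x hx => ?_)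
    · simp only [map_add, hx, hy, add_zero]
    · have h1 := a.d_degree i x hx
      rw [hΦ _ _ h1, hr (i + 1) ⟨a.d x, h1, a.d_sq x⟩ 0, map_zero]
      rw [map_zero, a.cls_eq_zero]
      exact ⟨x, rfl⟩
  have hΦc : ∀ i (x : c.cocycles i),
      Φ (f.toFun x) = DirectSum.lof K ℤ (fun i => c.cohomology i) i (c.cls i x) := fun i x => by
    rw [hΦ i _ (f.map_grading i _ x.2.1)]
    exact congrArg _ (hr i (f.toCochainMap.cocyclesMap i x) _
      (f.toCochainMap.cohMap_cls i x).symm)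
  refine ⟨⟨Φ ∘ₗ f.toFun, fun i x hx => ?_, fun x => ?_, fun x y => ?_⟩, fun i => ?_⟩
  · exact ⟨_, (hΦ i _ (f.map_grading i x hx)).symm⟩
  · rw [LinearMap.comp_apply, f.map_d]
    exact hΦd _
  · rw [LinearMap.comp_apply, f.map_bracket, hA, map_zero]
    rfl
  · rw [CochainMap.bij_iff]
    constructor
    · rintro x hx hd ⟨y, hy⟩
      have h0 : Φ (f.toFun x) = 0 := hy.symm
      rw [hΦc i ⟨x, hx, hd⟩] at h0
      have h1 := congrArg (DirectSum.component K ℤ (fun i => c.cohomology i) i) h0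
      rw [DirectSum.component.lof_self, map_zero, c.cls_eq_zero] at h1
      exact h1
    · rintro _ ⟨ξ, rfl⟩ _
      obtain ⟨x, hx, hd, rfl⟩ := c.cls_surj i ξ
      refine ⟨x, hx, hd, 0, ?_⟩
      change 0 = Φ (f.toFun x) - _
      rw [hΦc i ⟨x, hx, hd⟩, sub_self]

end DGLA

namespace PolyPath

variable {K : Type u} [Field K] {L : Type v} [AddCommGroup L] [Module K L]

/-- convolution of a bilinear map -/
noncomputable def conv (B : L →ₗ[K] L →ₗ[K] L) : (ℕ →₀ L) →ₗ[K] (ℕ →₀ L) →ₗ[K] (ℕ →₀ L) :=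
  Finsupp.lsum K fun m => LinearMap.flip (Finsupp.lsum K fun n =>
    LinearMap.flip (B.compr₂ (Finsupp.lsingle (m + n))))

theorem conv_single (B : L →ₗ[K] L →ₗ[K] L) (m n : ℕ) (x y : L) :
    conv B (Finsupp.single m x) (Finsupp.single n y) = Finsupp.single (m + n) (B x y) := by
  simp [conv]

/-- coefficientwise map -/
noncomputable def pmap (φ : L →ₗ[K] L) : (ℕ →₀ L) →ₗ[K] (ℕ →₀ L) := Finsupp.mapRange.linearMap φ

theorem pmap_single (φ : L →ₗ[K] L) (n : ℕ) (x : L) :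
    pmap φ (Finsupp.single n x) = Finsupp.single n (φ x) := by
  simp [pmap]

/-- derivative -/
noncomputable def der : (ℕ →₀ L) →ₗ[K] (ℕ →₀ L) :=
  Finsupp.lsum K fun n => (n : K) • Finsupp.lsingle (n - 1)

theorem der_single (n : ℕ) (x : L) :
    der (K := K) (Finsupp.single n x) = (n : K) • Finsupp.single (n - 1) x := by
  simp [der]

/-- integral -/
noncomputable def integ : (ℕ →₀ L) →ₗ[K] (ℕ →₀ L) :=
  Finsupp.lsum K fun n => ((n + 1 : K)⁻¹) • Finsupp.lsingle (n + 1)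

theorem integ_single (n : ℕ) (x : L) :
    integ (K := K) (Finsupp.single n x) = ((n + 1 : K)⁻¹) • Finsupp.single (n + 1) x := by
  simp [integ]

/-- evaluation at zero -/
noncomputable def ev0 : (ℕ →₀ L) →ₗ[K] L := Finsupp.lapply 0

/-- evaluation at one -/
noncomputable def ev1 : (ℕ →₀ L) →ₗ[K] L := Finsupp.lsum K fun _ => LinearMap.id

theorem ev1_single (n : ℕ) (x : L) : ev1 (K := K) (Finsupp.single n x) = x := by
  simp [ev1]

theorem ev0_zero (x : L) : ev0 (K := K) (Finsupp.single 0 x) = x := by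
  simp [ev0]

theorem ev0_succ (n : ℕ) (x : L) : ev0 (K := K) (Finsupp.single (n + 1) x) = 0 := by
  simp [ev0]

/-- Extensionality. -/
theorem lin_ext {W : Type v} [AddCommGroup W] [Module K W] {φ ψ : (ℕ →₀ L) →ₗ[K] W}
    (h : ∀ n x, φ (Finsupp.single n x) = ψ (Finsupp.single n x)) (a : ℕ →₀ L) : φ a = ψ a := by
  have : φ = ψ := Finsupp.lhom_ext h
  rw [this]

theorem der_integ [CharZero K] (a : ℕ →₀ L) : der (K := K) (integ (K := K) a) = a := by
  refine lin_ext (φ := der (K := K) ∘ₗ integ (K := K)) (ψ := LinearMap.id) (fun n x => ?_) a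
  have : (n + 1 : K) ≠ 0 := by exact_mod_cast Nat.succ_ne_zero n
  simp only [LinearMap.comp_apply, integ_single, map_smul, der_single, LinearMap.id_apply,
    smul_smul]
  push_cast
  rw [inv_mul_cancel₀ this, one_smul]

theorem integ_der [CharZero K] (a : ℕ →₀ L) :
    integ (K := K) (der (K := K) a) = a - Finsupp.single 0 (ev0 (K := K) a) := by
  refine lin_ext (φ := integ (K := K) ∘ₗ der (K := K))
    (ψ := LinearMap.id - Finsupp.lsingle 0 ∘ₗ ev0 (K := K)) (fun n x => ?_) a
  rcases n with _ | n
  · simp [der_single, ev0_zero]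
  · have : (n + 1 : K) ≠ 0 := by exact_mod_cast Nat.succ_ne_zero n
    simp [der_single, integ_single, ev0_succ, smul_smul, this]

theorem ev0_integ (a : ℕ →₀ L) : ev0 (K := K) (integ (K := K) a) = 0 := by
  refine lin_ext (φ := ev0 (K := K) ∘ₗ integ (K := K)) (ψ := 0) (fun n x => ?_) a
  simp [integ_single, ev0_succ]

theorem der_pmap (φ : L →ₗ[K] L) (a : ℕ →₀ L) :
    der (K := K) (pmap φ a) = pmap φ (der (K := K) a) := by
  refine lin_ext (φ := der (K := K) ∘ₗ pmap φ) (ψ := pmap φ ∘ₗ der (K := K)) (fun n x => ?_) a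
  simp only [LinearMap.comp_apply, pmap_single, der_single, map_smul]

theorem integ_pmap (φ : L →ₗ[K] L) (a : ℕ →₀ L) :
    integ (K := K) (pmap φ a) = pmap φ (integ (K := K) a) := by
  refine lin_ext (φ := integ (K := K) ∘ₗ pmap φ) (ψ := pmap φ ∘ₗ integ (K := K)) (fun n x => ?_) a
  simp only [LinearMap.comp_apply, pmap_single, integ_single, map_smul]

theorem ev0_pmap (φ : L →ₗ[K] L) (a : ℕ →₀ L) :
    ev0 (K := K) (pmap φ a) = φ (ev0 (K := K) a) := by
  simp [ev0, pmap]

theorem ev1_pmap (φ : L →ₗ[K] L) (a : ℕ →₀ L) :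
    ev1 (K := K) (pmap φ a) = φ (ev1 (K := K) a) := by
  refine lin_ext (φ := ev1 (K := K) ∘ₗ pmap φ) (ψ := φ ∘ₗ ev1 (K := K)) (fun n x => ?_) a
  simp only [LinearMap.comp_apply, pmap_single, ev1_single]

theorem ev0_conv (B : L →ₗ[K] L →ₗ[K] L) (a b : ℕ →₀ L) :
    ev0 (K := K) (conv B a b) = B (ev0 (K := K) a) (ev0 (K := K) b) := by
  induction a using Finsupp.induction_linear with
  | zero => simp
  | add a a' ha ha' => simp [ha, ha']
  | single m x =>
    induction b using Finsupp.induction_linear with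
    | zero => simp
    | add b b' hb hb' => simp [hb, hb']
    | single n y =>
      rw [conv_single]
      rcases m with _ | m
      · rcases n with _ | n
        · simp only [add_zero, ev0_zero]
        · rw [← add_assoc, ev0_succ, ev0_succ, map_zero]
      · rw [ev0_succ, show m + 1 + n = (m + n) + 1 by omega, ev0_succ, map_zero]
        rfl

theorem ev1_conv (B : L →ₗ[K] L →ₗ[K] L) (a b : ℕ →₀ L) :
    ev1 (K := K) (conv B a b) = B (ev1 (K := K) a) (ev1 (K := K) b) := by
  induction a using Finsupp.induction_linear with
  | zero => simp
  | add a a' ha ha' => simp [ha, ha']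
  | single m x =>
    induction b using Finsupp.induction_linear with
    | zero => simp
    | add b b' hb hb' => simp [hb, hb']
    | single n y => simp only [conv_single, ev1_single]

theorem der_conv (B : L →ₗ[K] L →ₗ[K] L) (a b : ℕ →₀ L) :
    der (K := K) (conv B a b) = conv B (der (K := K) a) b + conv B a (der (K := K) b) := by
  induction a using Finsupp.induction_linear with
  | zero => simp
  | add a a' ha ha' => simp only [map_add, LinearMap.add_apply, ha, ha']; abel
  | single m x =>
    induction b using Finsupp.induction_linear with
    | zero => simp
    | add b b' hb hb' => simp only [map_add, hb, hb']; abel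
    | single n y =>
      simp only [conv_single, der_single, map_smul, LinearMap.smul_apply]
      rcases m with _ | m
      · simp
      · rcases n with _ | n
        · simp
        · rw [show m + 1 + (n + 1) - 1 = m + n + 1 by omega,
            show m + 1 - 1 + (n + 1) = m + n + 1 by omega,
            show m + 1 + (n + 1 - 1) = m + n + 1 by omega, ← add_smul]
          push_cast
          rfl

/-- polynomials with homogeneous coefficients -/
noncomputable def pg (G : ℤ → Submodule K L) (i : ℤ) : Submodule K (ℕ →₀ L) :=
  ⨆ n : ℕ, (G i).map (Finsupp.lsingle n)

theorem single_mem_pg {G : ℤ → Submodule K L} {i : ℤ} (n : ℕ) {x : L} (hx : x ∈ G i) :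
    Finsupp.single n x ∈ pg G i :=
  Submodule.mem_iSup_of_mem n ⟨x, hx, rfl⟩

theorem pg_induction {G : ℤ → Submodule K L} {i : ℤ} (p : (ℕ →₀ L) → Prop) {a : ℕ →₀ L}
    (ha : a ∈ pg G i) (h0 : p 0) (hadd : ∀ x y, p x → p y → p (x + y))
    (hs : ∀ n, ∀ x ∈ G i, p (Finsupp.single n x)) : p a := by
  refine Submodule.iSup_induction _ (motive := p) ha ?_ h0 hadd
  rintro n _ ⟨x, hx, rfl⟩
  exact hs n x hx

theorem pg_map_mem {G : ℤ → Submodule K L} {i : ℤ} {W : Type v} [AddCommGroup W] [Module K W]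
    {T : Submodule K W} (φ : (ℕ →₀ L) →ₗ[K] W)
    (hs : ∀ n, ∀ x ∈ G i, φ (Finsupp.single n x) ∈ T) {a : ℕ →₀ L} (ha : a ∈ pg G i) : φ a ∈ T :=
  pg_induction (fun a => φ a ∈ T) ha (by simp) (fun x y hx hy => by
    rw [map_add]; exact add_mem hx hy) hs

theorem pg_map_eq {G : ℤ → Submodule K L} {i : ℤ} {W : Type v} [AddCommGroup W] [Module K W]
    (φ ψ : (ℕ →₀ L) →ₗ[K] W)
    (hs : ∀ n, ∀ x ∈ G i, φ (Finsupp.single n x) = ψ (Finsupp.single n x)) {a : ℕ →₀ L}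
    (ha : a ∈ pg G i) : φ a = ψ a :=
  pg_induction (fun a => φ a = ψ a) ha (by simp) (fun x y hx hy => by
    simp only [map_add, hx, hy]) hs

section
variable (g : DGLAStruct K L)

theorem conv_mem {i j : ℤ} {a b : ℕ →₀ L} (ha : a ∈ pg g.grading i) (hb : b ∈ pg g.grading j) :
    conv g.bracket a b ∈ pg g.grading (i + j) := by
  refine pg_map_mem ((conv g.bracket).flip b) (fun m x hx => ?_) ha
  refine pg_map_mem (conv g.bracket (Finsupp.single m x)) (fun n y hy => ?_) hb
  rw [conv_single]
  exact single_mem_pg _ (g.bracket_degree i j x hx y hy)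

theorem conv_skew {i j : ℤ} {a b : ℕ →₀ L} (ha : a ∈ pg g.grading i) (hb : b ∈ pg g.grading j) :
    conv g.bracket a b = -(((-1 : K) ^ (i * j)) • conv g.bracket b a) := by
  refine pg_map_eq ((conv g.bracket).flip b)
    (-(((-1 : K) ^ (i * j)) • conv g.bracket b)) (fun m x hx => ?_) ha
  refine pg_map_eq (conv g.bracket (Finsupp.single m x))
    (-(((-1 : K) ^ (i * j)) • (conv g.bracket).flip (Finsupp.single m x))) (fun n y hy => ?_) hb
  simp only [LinearMap.neg_apply, LinearMap.smul_apply, LinearMap.flip_apply, conv_single]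
  rw [g.bracket_skew i j x hx y hy, add_comm m n, Finsupp.smul_single, ← Finsupp.single_neg]

theorem conv_jacobi {i j : ℤ} {a b : ℕ →₀ L} (ha : a ∈ pg g.grading i)
    (hb : b ∈ pg g.grading j) (z : ℕ →₀ L) :
    conv g.bracket a (conv g.bracket b z) = conv g.bracket (conv g.bracket a b) z
      + ((-1 : K) ^ (i * j)) • conv g.bracket b (conv g.bracket a z) := by
  induction z using Finsupp.induction_linear with
  | zero => simp
  | add z z' h h' => simp only [map_add, h, h', smul_add]; abel
  | single l z =>
    refine pg_induction (fun a => conv g.bracket a (conv g.bracket b (Finsupp.single l z)) =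
      conv g.bracket (conv g.bracket a b) (Finsupp.single l z)
      + ((-1 : K) ^ (i * j)) • conv g.bracket b (conv g.bracket a (Finsupp.single l z))) ha
      (by simp) (fun x y hx hy => ?_) (fun m x hx => ?_)
    · simp only [map_add, LinearMap.add_apply, hx, hy, smul_add]; abel
    refine pg_induction (fun b => conv g.bracket (Finsupp.single m x)
      (conv g.bracket b (Finsupp.single l z)) =
      conv g.bracket (conv g.bracket (Finsupp.single m x) b) (Finsupp.single l z)
      + ((-1 : K) ^ (i * j)) • conv g.bracket b
        (conv g.bracket (Finsupp.single m x) (Finsupp.single l z))) hb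
      (by simp) (fun x y hx hy => ?_) (fun n y hy => ?_)
    · simp only [map_add, LinearMap.add_apply, hx, hy, smul_add]; abel
    simp only [conv_single]
    rw [g.bracket_jacobi i j x hx y hy z, Finsupp.single_add, Finsupp.smul_single,
      add_assoc, add_left_comm n m l]

theorem conv_leibniz {i : ℤ} {a : ℕ →₀ L} (ha : a ∈ pg g.grading i) (z : ℕ →₀ L) :
    pmap g.d (conv g.bracket a z) = conv g.bracket (pmap g.d a) z
      + ((-1 : K) ^ i) • conv g.bracket a (pmap g.d z) := by
  induction z using Finsupp.induction_linear with
  | zero => simp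
  | add z z' h h' => simp only [map_add, h, h', smul_add]; abel
  | single l z =>
    refine pg_induction (fun a => pmap g.d (conv g.bracket a (Finsupp.single l z)) =
      conv g.bracket (pmap g.d a) (Finsupp.single l z)
      + ((-1 : K) ^ i) • conv g.bracket a (pmap g.d (Finsupp.single l z))) ha
      (by simp) (fun x y hx hy => ?_) (fun m x hx => ?_)
    · simp only [map_add, LinearMap.add_apply, hx, hy, smul_add]; abel
    simp only [conv_single, pmap_single]
    rw [g.bracket_leibniz i x hx z, Finsupp.single_add, Finsupp.smul_single]

theorem d_mem {i : ℤ} {a : ℕ →₀ L} (ha : a ∈ pg g.grading i) :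
    pmap g.d a ∈ pg g.grading (i + 1) :=
  pg_map_mem _ (fun n x hx => by
    rw [pmap_single]; exact single_mem_pg _ (g.d_degree i x hx)) ha

theorem der_mem {i : ℤ} {a : ℕ →₀ L} (ha : a ∈ pg g.grading i) :
    der (K := K) a ∈ pg g.grading i :=
  pg_map_mem _ (fun n x hx => by
    rw [der_single]; exact Submodule.smul_mem _ _ (single_mem_pg _ hx)) ha

theorem sgn_mem_pg {i : ℤ} {a : ℕ →₀ L} (ha : a ∈ pg g.grading i) :
    pmap g.sgn a = ((-1 : K) ^ i) • a :=
  pg_map_eq _ (((-1 : K) ^ i) • LinearMap.id) (fun n x hx => by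
    rw [pmap_single, g.sgn_mem hx]; simp) ha

theorem d_d (a : ℕ →₀ L) : pmap g.d (pmap g.d a) = 0 := by
  refine lin_ext (φ := pmap g.d ∘ₗ pmap g.d) (ψ := 0) (fun n x => ?_) a
  simp [pmap_single, g.d_sq]

theorem pr_same_pg {i : ℤ} {a : ℕ →₀ L} (ha : a ∈ pg g.grading i) : pmap (g.pr i) a = a :=
  pg_map_eq _ LinearMap.id (fun n x hx => by
    rw [pmap_single, g.pr_same hx]; simp) ha

theorem pr_ne_pg {i j : ℤ} (h : j ≠ i) {a : ℕ →₀ L} (ha : a ∈ pg g.grading j) :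
    pmap (g.pr i) a = 0 :=
  pg_map_eq _ 0 (fun n x hx => by
    rw [pmap_single, g.pr_ne hx h]; simp) ha

theorem sgn_mul_self (i : ℤ) : ((-1 : K) ^ i) = 1 ∨ ((-1 : K) ^ i) = -1 := by
  rcases Int.even_or_odd i with h | h
  · exact Or.inl h.neg_one_zpow
  · exact Or.inr h.neg_one_zpow

/-- grading of the path object -/
noncomputable def pathGr (i : ℤ) : Submodule K ((ℕ →₀ L) × (ℕ →₀ L)) :=
  (pg g.grading i).prod (pg g.grading (i - 1))

theorem pathInternal : DirectSum.IsInternal (pathGr g) := by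
  refine CochainStruct.mkInternal _ (fun i => (pmap (g.pr i)).prodMap (pmap (g.pr (i - 1))))
    ?_ ?_ ?_
  · rintro i ⟨a, b⟩ ⟨h1, h2⟩
    exact Prod.ext (pr_same_pg g h1) (pr_same_pg g h2)
  · rintro i j hj ⟨a, b⟩ ⟨h1, h2⟩
    exact Prod.ext (pr_ne_pg g hj h1) (pr_ne_pg g (by omega) h2)
  · rintro ⟨a, b⟩
    have h1 : ∀ a : ℕ →₀ L, (a, (0 : ℕ →₀ L)) ∈ ⨆ i, pathGr g i := fun a => by
      induction a using Finsupp.induction_linear with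
      | zero => exact zero_mem _
      | add a a' h h' => simpa using add_mem h h'
      | single n x =>
        refine g.hom_induction
          (fun x => (Finsupp.single n x, (0 : ℕ →₀ L)) ∈ ⨆ i, pathGr g i) x
          (by rw [Finsupp.single_zero]; exact zero_mem _) (fun x y h h' => by simpa using add_mem h h') (fun i x hx => ?_)
        exact Submodule.mem_iSup_of_mem i ⟨single_mem_pg n hx, zero_mem _⟩
    have h2 : ∀ a : ℕ →₀ L, ((0 : ℕ →₀ L), a) ∈ ⨆ i, pathGr g i := fun a => by
      induction a using Finsupp.induction_linear with
      | zero => exact zero_mem _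
      | add a a' h h' => simpa using add_mem h h'
      | single n x =>
        refine g.hom_induction
          (fun x => ((0 : ℕ →₀ L), Finsupp.single n x) ∈ ⨆ i, pathGr g i) x
          (by rw [Finsupp.single_zero]; exact zero_mem _) (fun x y h h' => by simpa using add_mem h h') (fun i x hx => ?_)
        refine Submodule.mem_iSup_of_mem (i + 1) ⟨zero_mem _, ?_⟩
        simpa using single_mem_pg n hx
    simpa using add_mem (h1 a) (h2 b)

/-- bracket on the path object -/
noncomputable def pathBr : ((ℕ →₀ L) × (ℕ →₀ L)) →ₗ[K] ((ℕ →₀ L) × (ℕ →₀ L)) →ₗ[K]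
    ((ℕ →₀ L) × (ℕ →₀ L)) :=
  LinearMap.mk₂ K (fun x y => (conv g.bracket x.1 y.1,
      conv g.bracket x.2 y.1 + conv g.bracket (pmap g.sgn x.1) y.2))
    (fun x y z => Prod.ext (by simp) (by simp; abel))
    (fun x y z => Prod.ext (by simp) (by simp))
    (fun x y z => Prod.ext (by simp) (by simp; abel))
    (fun x y z => Prod.ext (by simp) (by simp))

theorem pathBr_apply (x y : (ℕ →₀ L) × (ℕ →₀ L)) : pathBr g x y = (conv g.bracket x.1 y.1,
      conv g.bracket x.2 y.1 + conv g.bracket (pmap g.sgn x.1) y.2) := rfl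

/-- differential on the path object -/
noncomputable def pathD : ((ℕ →₀ L) × (ℕ →₀ L)) →ₗ[K] ((ℕ →₀ L) × (ℕ →₀ L)) :=
  LinearMap.prod (pmap g.d ∘ₗ LinearMap.fst K _ _)
    (der (K := K) ∘ₗ LinearMap.fst K _ _ - pmap g.d ∘ₗ LinearMap.snd K _ _)

theorem pathD_apply (x : (ℕ →₀ L) × (ℕ →₀ L)) :
    pathD g x = (pmap g.d x.1, der (K := K) x.1 - pmap g.d x.2) := rfl

theorem zp1 (i j : ℤ) : ((-1 : K) ^ ((i - 1) * j)) = (-1 : K) ^ (i * j) * (-1 : K) ^ j := by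
  rw [sub_mul, one_mul, zpow_sub₀ (by simp), div_eq_mul_inv, ← zpow_neg, ← inv_zpow']
  congr 2
  norm_num

theorem zp2 (i j : ℤ) : ((-1 : K) ^ (i * (j - 1))) = (-1 : K) ^ (i * j) * (-1 : K) ^ i := by
  rw [mul_comm, zp1, mul_comm j i]

theorem zp3 (i : ℤ) : ((-1 : K) ^ (i - 1)) = - (-1 : K) ^ i := by
  rw [zpow_sub₀ (by simp), zpow_one, div_neg, div_one]

theorem zp4 (i : ℤ) : ((-1 : K) ^ (i + 1)) = - (-1 : K) ^ i := by
  rw [zpow_add₀ (by simp)]; simp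

/-- The path object `L[t,dt]`. -/
noncomputable def path : DGLAStruct K ((ℕ →₀ L) × (ℕ →₀ L)) where
  grading := pathGr g
  isInternal := pathInternal g
  d := pathD g
  d_degree := by
    rintro i ⟨a, b⟩ ⟨h1, h2⟩
    refine ⟨d_mem g h1, ?_⟩
    have h3 := d_mem g h2
    rw [sub_add_cancel] at h3
    simp only [pathD_apply, add_sub_cancel_right]
    exact sub_mem (der_mem g h1) h3
  d_sq := by
    rintro ⟨a, b⟩
    simp only [pathD_apply, map_sub, d_d, der_pmap]
    simp
  bracket := pathBr g
  bracket_degree := by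
    rintro i j ⟨a, b⟩ ⟨h1, h2⟩ ⟨a', b'⟩ ⟨h1', h2'⟩
    dsimp only at h1 h2 h1' h2'
    refine ⟨conv_mem g h1 h1', ?_⟩
    simp only [pathBr_apply]
    rw [sgn_mem_pg g h1, map_smul, LinearMap.smul_apply]
    refine add_mem ?_ (Submodule.smul_mem _ _ ?_)
    · have := conv_mem g h2 h1'
      rwa [show i - 1 + j = i + j - 1 by ring] at this
    · have := conv_mem g h1 h2'
      rwa [show i + (j - 1) = i + j - 1 by ring] at this
  bracket_skew := by
    rintro i j ⟨a, b⟩ ⟨h1, h2⟩ ⟨a', b'⟩ ⟨h1', h2'⟩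
    dsimp only at h1 h2 h1' h2'
    refine Prod.ext (conv_skew g h1 h1') ?_
    simp only [pathBr_apply, Prod.snd_neg, Prod.smul_snd]
    rw [sgn_mem_pg g h1, sgn_mem_pg g h1', conv_skew g h2 h1']
    simp only [map_smul, LinearMap.smul_apply]
    rw [conv_skew g h1 h2', zp1, zp2]
    rcases sgn_mul_self (K := K) i with hi | hi <;> rcases sgn_mul_self (K := K) j with hj | hj <;>
    rw [hi, hj] <;> simp <;> abel
  bracket_jacobi := by
    rintro i j ⟨a, b⟩ ⟨h1, h2⟩ ⟨a', b'⟩ ⟨h1', h2'⟩ ⟨p, q⟩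
    dsimp only at h1 h2 h1' h2'
    refine Prod.ext (conv_jacobi g h1 h1' p) ?_
    simp only [pathBr_apply, Prod.snd_add, Prod.smul_snd]
    rw [sgn_mem_pg g h1, sgn_mem_pg g h1', sgn_mem_pg g (conv_mem g h1 h1')]
    simp only [map_smul, LinearMap.smul_apply, map_add, LinearMap.add_apply]
    rw [conv_jacobi g h2 h1', conv_jacobi g h1 h2', conv_jacobi g h1 h1', zp1, zp2,
      zpow_add₀ (by simp : (-1 : K) ≠ 0)]
    rcases sgn_mul_self (K := K) i with hi | hi <;> rcases sgn_mul_self (K := K) j with hj | hj <;>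
    rw [hi, hj] <;> simp <;> abel
  bracket_leibniz := by
    rintro i ⟨a, b⟩ ⟨h1, h2⟩ ⟨p, q⟩
    dsimp only at h1 h2
    refine Prod.ext (conv_leibniz g h1 p) ?_
    simp only [pathBr_apply, pathD_apply, Prod.snd_add, Prod.smul_snd]
    rw [sgn_mem_pg g h1, sgn_mem_pg g (d_mem g h1), der_conv]
    simp only [map_smul, LinearMap.smul_apply, map_add, LinearMap.add_apply, map_sub,
      LinearMap.sub_apply]
    rw [conv_leibniz g h2, conv_leibniz g h1, zp3, zp4]
    rcases sgn_mul_self (K := K) i with hi | hi <;>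
    rw [hi] <;> simp <;> abel

/-- evaluation at zero as a morphism -/
noncomputable def pev0 : DGLAStructHom (path g) g where
  toFun := ev0 (K := K) ∘ₗ LinearMap.fst K _ _
  map_grading i x hx := pg_map_mem (ev0 (K := K)) (fun n x hx => by
    rcases n with _ | n
    · rw [ev0_zero]; exact hx
    · rw [ev0_succ]; exact zero_mem _) hx.1
  map_d x := ev0_pmap g.d x.1
  map_bracket x y := ev0_conv g.bracket x.1 y.1

/-- evaluation at one as a morphism -/
noncomputable def pev1 : DGLAStructHom (path g) g where
  toFun := ev1 (K := K) ∘ₗ LinearMap.fst K _ _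
  map_grading i x hx := pg_map_mem (ev1 (K := K)) (fun n x hx => by
    rw [ev1_single]; exact hx) hx.1
  map_d x := ev1_pmap g.d x.1
  map_bracket x y := ev1_conv g.bracket x.1 y.1

theorem pev0_surj : Function.Surjective (pev0 g).toFun := fun x =>
  ⟨(Finsupp.single 0 x, 0), ev0_zero (K := K) x⟩

theorem cocycle_iff {x : (ℕ →₀ L) × (ℕ →₀ L)} (hx : (path g).d x = 0) :
    pmap g.d x.1 = 0 ∧ der (K := K) x.1 = pmap g.d x.2 :=
  ⟨congrArg Prod.fst hx, sub_eq_zero.1 (congrArg Prod.snd hx)⟩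

theorem pev0_qis [CharZero K] : (pev0 g).IsQuasiIso := by
  rw [DGLAStructHom.qis_iff]
  constructor
  · rintro x hx ⟨y, hy⟩
    obtain ⟨h1, h2⟩ := cocycle_iff g hx
    have hy' : g.d y = ev0 (K := K) x.1 := hy
    refine ⟨(Finsupp.single 0 y + integ (K := K) x.2, 0), Prod.ext ?_ ?_⟩
    · change pmap g.d (Finsupp.single 0 y + integ (K := K) x.2) = x.1
      rw [map_add, pmap_single, ← integ_pmap, ← h2, integ_der, hy']
      abel
    · change der (K := K) (Finsupp.single 0 y + integ (K := K) x.2) - pmap g.d 0 = x.2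
      rw [map_add, der_integ, der_single]
      simp
  · intro y hy
    refine ⟨(Finsupp.single 0 y, 0), Prod.ext ?_ ?_, 0, ?_⟩
    · change pmap g.d (Finsupp.single 0 y) = 0
      rw [pmap_single, hy]; simp
    · change der (K := K) (Finsupp.single 0 y) - pmap g.d 0 = 0
      rw [der_single]; simp
    · change g.d 0 = ev0 (K := K) (Finsupp.single 0 y) - y
      rw [ev0_zero]; simp

theorem pev_homotopic [CharZero K] (i : ℤ) (ξ : (path g).toCochainStruct.cohomology i) :
    (pev1 g).toCochainMap.cohMap i ξ = (pev0 g).toCochainMap.cohMap i ξ := by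
  obtain ⟨x, hx, hd, rfl⟩ := (path g).toCochainStruct.cls_surj i ξ
  obtain ⟨h1, h2⟩ := cocycle_iff g hd
  rw [CochainMap.cohMap_cls, CochainMap.cohMap_cls, CochainStruct.cls_eq]
  refine ⟨ev1 (K := K) (integ (K := K) x.2), ?_⟩
  change _ = ev1 (K := K) x.1 - ev0 (K := K) x.1
  rw [← ev1_pmap, ← integ_pmap, ← h2, integ_der, map_sub, ev1_single]

end

end PolyPath

namespace DGLA

variable {K : Type u} [Field K] [CharZero K]

open DGLAStructHom PolyPath in
/-- Replacement of a quasi-isomorphism by a surjective one. -/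
theorem surjReplace {Y C : DGLA.{u, v} K}
    (h : DGLAStructHom C.str Y.str) (hh : h.IsQuasiIso) :
    ∃ (Z : DGLA.{u, v} K) (q : DGLAStructHom Z.str Y.str) (a : DGLAStructHom Z.str C.str),
      q.IsQuasiIso ∧ Function.Surjective q.toFun ∧ ∀ i ξ, q.toCochainMap.cohMap i ξ
        = h.toCochainMap.cohMap i (a.toCochainMap.cohMap i ξ) := by
  have ha : (pbFst h (pev0 Y.str)).IsQuasiIso := pbFst_qis h _ (pev0_surj _) (pev0_qis _)
  have hqa : ∀ i ξ, ((pev1 Y.str).comp (pbSnd h (pev0 Y.str))).toCochainMap.cohMap i ξ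
      = h.toCochainMap.cohMap i ((pbFst h (pev0 Y.str)).toCochainMap.cohMap i ξ) := by
    intro i ξ
    rw [← cohMap_comp h, pb_comm, cohMap_comp, cohMap_comp]
    exact pev_homotopic _ _ _
  refine ⟨⟨_, pb h (pev0 Y.str)⟩, (pev1 Y.str).comp (pbSnd h (pev0 Y.str)), pbFst h (pev0 Y.str),
    fun i => ?_, fun y => ?_, hqa⟩
  · have : ⇑(((pev1 Y.str).comp (pbSnd h (pev0 Y.str))).toCochainMap.cohMap i)
        = h.toCochainMap.cohMap i ∘ (pbFst h (pev0 Y.str)).toCochainMap.cohMap i :=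
      funext (hqa i)
    rw [this]
    exact (hh i).comp (ha i)
  · have hm : ((0 : C.carrier), ((Finsupp.single 1 y, 0) : (ℕ →₀ Y.carrier) × (ℕ →₀ Y.carrier)))
        ∈ pbSub h (pev0 Y.str) := by
      rw [mem_pbSub]
      exact (map_zero h.toFun).trans (ev0_succ (K := K) 0 y).symm
    exact ⟨⟨_, hm⟩, ev1_single (K := K) 1 y⟩

open DGLAStructHom in
/-- Homotopy pullback. -/
theorem hoPullback {X Y C : DGLA.{u, v} K} (f : DGLAStructHom X.str Y.str)
    (h : DGLAStructHom C.str Y.str) (hh : h.IsQuasiIso) :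
    ∃ (P : DGLA.{u, v} K) (p : DGLAStructHom P.str X.str) (r : DGLAStructHom P.str C.str),
      p.IsQuasiIso ∧ ∀ i ξ, f.toCochainMap.cohMap i (p.toCochainMap.cohMap i ξ)
        = h.toCochainMap.cohMap i (r.toCochainMap.cohMap i ξ) := by
  obtain ⟨Z, q, a, hq, hs, hqa⟩ := surjReplace h hh
  refine ⟨⟨_, pb f q⟩, pbFst f q, a.comp (pbSnd f q), pbFst_qis f q hs hq, fun i ξ => ?_⟩
  rw [← cohMap_comp f, pb_comm, cohMap_comp, hqa, cohMap_comp]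

/-- `X` has a resolution mapping to an abelian DGLA, with kernel in cohomology inside `S`. -/
def Q (X : DGLA.{u, v} K) (S : ∀ i, Set (X.str.toCochainStruct.cohomology i)) : Prop :=
  ∃ (C A : DGLA.{u, v} K) (q : DGLAStructHom C.str X.str) (g : DGLAStructHom C.str A.str),
    q.IsQuasiIso ∧ A.IsAbelian ∧ ∀ i ξ, g.toCochainMap.cohMap i ξ = 0 →
      q.toCochainMap.cohMap i ξ ∈ S i

theorem Q.mono {X : DGLA.{u, v} K} {S T : ∀ i, Set (X.str.toCochainStruct.cohomology i)}
    (h : Q X S) (hST : ∀ i, S i ⊆ T i) : Q X T := by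
  obtain ⟨C, A, q, g, hq, hA, hk⟩ := h
  exact ⟨C, A, q, g, hq, hA, fun i ξ h => hST i (hk i ξ h)⟩

theorem Q.pull {X Y : DGLA.{u, v} K} {S : ∀ i, Set (Y.str.toCochainStruct.cohomology i)}
    (h : Q Y S) (f : DGLAStructHom X.str Y.str) :
    Q X (fun i => (f.toCochainMap.cohMap i) ⁻¹' (S i)) := by
  obtain ⟨C, A, q, g, hq, hA, hk⟩ := h
  obtain ⟨P, p, r, hp, hc⟩ := hoPullback f q hq
  refine ⟨P, A, p, g.comp r, hp, hA, fun i ξ h => ?_⟩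
  rw [Set.mem_preimage, hc]
  apply hk
  rw [← DGLAStructHom.cohMap_comp, h]

theorem Q.push {X Y : DGLA.{u, v} K} {S : ∀ i, Set (X.str.toCochainStruct.cohomology i)}
    (h : Q X S) (f : DGLAStructHom X.str Y.str) (hf : f.IsQuasiIso) :
    Q Y (fun i => (f.toCochainMap.cohMap i) '' (S i)) := by
  obtain ⟨C, A, q, g, hq, hA, hk⟩ := h
  refine ⟨C, A, f.comp q, g, DGLAStructHom.qis_comp _ _ hf hq, hA, fun i ξ h => ?_⟩
  exact ⟨_, hk i ξ h, (DGLAStructHom.cohMap_comp f q i ξ).symm⟩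

theorem Q_iff_of_equiv {X Y : DGLA.{u, v} K} (h : HomotopyEquiv X Y) :
    Q X (fun _ => {0}) ↔ Q Y (fun _ => {0}) := by
  induction h with
  | rel X Y h =>
    obtain ⟨f, hf⟩ := h
    constructor
    · intro h
      refine (h.push f hf).mono fun i => ?_
      simp
    · intro h
      refine (h.pull f).mono fun i ξ hξ => ?_
      exact (hf i).1 ((Set.mem_singleton_iff.1 hξ).trans (map_zero _).symm)
  | refl X => exact Iff.rfl
  | symm X Y _ ih => exact ih.symm
  | trans X Y Z _ _ ih ih' => exact ih.trans ih'

theorem Q_of_homotopyAbelian {X : DGLA.{u, v} K} (h : X.HomotopyAbelian) :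
    Q X (fun _ => {0}) := by
  obtain ⟨Y, hY, hXY⟩ := h
  rw [Q_iff_of_equiv hXY]
  refine ⟨Y, Y, DGLAStructHom.idHom _, DGLAStructHom.idHom _, fun i => ?_, hY, fun i ξ h => h⟩
  have : ⇑((DGLAStructHom.idHom Y.str).toCochainMap.cohMap i) = id :=
    funext fun ξ => DGLAStructHom.cohMap_id i ξ
  rw [this]
  exact Function.bijective_id

theorem homotopyAbelian_of_Q {X : DGLA.{u, v} K} (h : Q X (fun _ => {0})) :
    X.HomotopyAbelian := by
  obtain ⟨C, A, q, g, hq, hA, hk⟩ := h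
  obtain ⟨φ, hφ⟩ := toCoh_exists hA g (fun i => by
    rw [injective_iff_map_eq_zero]
    intro ξ h
    exact (hq i).1 ((Set.mem_singleton_iff.1 (hk i ξ h)).trans (map_zero _).symm))
  refine ⟨⟨_, cohDGLA C.str.toCochainStruct⟩, fun x y => rfl, ?_⟩
  exact Relation.EqvGen.trans _ C _ (Relation.EqvGen.symm _ _ (Relation.EqvGen.rel _ _ ⟨q, hq⟩))
    (Relation.EqvGen.rel _ _ ⟨φ, hφ⟩)

theorem Q_zigzag {X Y : DGLA.{u, v} K} (f : ZigZag X Y) (h : Q Y (fun _ => {0})) :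
    Q X (fun i => {ξ | f.cohMap i ξ = 0}) := by
  induction f with
  | refl X => exact h
  | fwd f t ih => exact (ih h).pull f
  | bwd f hf t ih =>
    refine ((ih h).push f hf).mono fun i => ?_
    rintro _ ⟨ξ, hξ, rfl⟩
    have hξ' : t.cohMap i ξ = 0 := hξ
    change t.cohMap i ((LinearEquiv.ofBijective (f.toCochainMap.cohMap i) (hf i)).symm
      (f.toCochainMap.cohMap i ξ)) = 0
    have : (LinearEquiv.ofBijective (f.toCochainMap.cohMap i) (hf i)).symm
      (f.toCochainMap.cohMap i ξ) = ξ :=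
      (LinearEquiv.ofBijective (f.toCochainMap.cohMap i) (hf i)).symm_apply_apply ξ
    rw [this, hξ']

end DGLA

end Helpers

/-- Let `f : M₁ ⇢ M₂` be an `L∞` morphism of differential graded Lie
algebras over a field `K` of characteristic `0` (i.e. a morphism in the homotopy category
of DGLAs, encoded as a zig-zag of DGLA morphisms) with `M₂` homotopy abelian.  If `f`
induces an injective morphism in cohomology `H^*(M₁) → H^*(M₂)`, then `M₁` is also
homotopy abelian. -/
theorem linfty_injective_of_homotopy_abelian {K : Type u} [Field K] [CharZero K]
    {M₁ M₂ : DGLA.{u, v} K} (f : ZigZag M₁ M₂) (h₂ : M₂.HomotopyAbelian)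
    (hinj : ∀ i : ℤ, Function.Injective (f.cohMap i)) :
    M₁.HomotopyAbelian := by
  exact DGLA.homotopyAbelian_of_Q ((DGLA.Q_zigzag f (DGLA.Q_of_homotopyAbelian h₂)).mono
    fun i ξ hξ => hinj i (Eq.trans hξ (map_zero _).symm))
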